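/- arXiv:2011.12152 — 8 statements merged into one kernel-verified Lean document; each statement's English description precedes it below -/
import Mathlib

section
/- Let α, β, γ ∈ (0, π) be real numbers and let a, b, c be positive real numbers satisfying the three law-of-cosines relations a² = b² + c² − 2·b·c·cos α, b² = a² + c² − 2·a·c·cos β, and c² = a² + b² − 2·a·b·cos γ. Then α + β + γ = π. -/
open Real

theorem trigon_angle_sum
    (α β γ : ℝ) (hα : α ∈ Set.Ioo 0 π) (hβ : β ∈ Set.Ioo 0 π) (hγ : γ ∈ Set.Ioo 0 π)
    (a b c : ℝ) (ha : 0 < a) (hb : 0 < b) (hc : 0 < c)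
    (h1 : a ^ 2 = b ^ 2 + c ^ 2 - 2 * b * c * Real.cos α)
    (h2 : b ^ 2 = a ^ 2 + c ^ 2 - 2 * a * c * Real.cos β)
    (h3 : c ^ 2 = a ^ 2 + b ^ 2 - 2 * a * b * Real.cos γ) :
    α + β + γ = π := by
  obtain ⟨hα0, hα1⟩ := hα
  obtain ⟨hβ0, hβ1⟩ := hβ
  obtain ⟨hγ0, hγ1⟩ := hγ
  have sα : 0 < sin α := sin_pos_of_pos_of_lt_pi hα0 hα1
  have sβ : 0 < sin β := sin_pos_of_pos_of_lt_pi hβ0 hβ1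
  have pα := sin_sq_add_cos_sq α
  have pβ := sin_sq_add_cos_sq β
  -- projection formulas
  have p1 : c = a * cos β + b * cos α :=
    mul_left_cancel₀ hc.ne' (by linarith)
  have p2 : b = a * cos γ + c * cos α :=
    mul_left_cancel₀ hb.ne' (by linarith)
  -- law of sines
  have ls : a * sin β = b * sin α := by
    have hd : c * (a * cos β - b * cos α) = a ^ 2 - b ^ 2 := by linarith
    have hsq : (a * sin β) ^ 2 = (b * sin α) ^ 2 := by
      have hd' : (a * cos β + b * cos α) * (a * cos β - b * cos α) = a ^ 2 - b ^ 2 := by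
        rw [← p1]; exact hd
      linear_combination a ^ 2 * pβ - b ^ 2 * pα - hd'
    exact (pow_left_inj₀ (by positivity) (by positivity) two_ne_zero).1 hsq
  have hs : a * sin (α + β) = c * sin α := by
    rw [sin_add]
    linear_combination cos α * ls - sin α * p1
  have hcos : cos γ = -cos (α + β) := by
    apply mul_left_cancel₀ ha.ne'
    rw [cos_add]
    linear_combination -p2 - cos α * p1 - b * pα - sin α * ls
  have hspos : 0 < sin (α + β) := by
    have : 0 < a * sin (α + β) := hs ▸ mul_pos hc sα
    exact pos_of_mul_pos_right this ha.le
  have hlt : α + β < π := by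
    by_contra! hge
    have h0 : 0 ≤ sin (α + β - π) :=
      sin_nonneg_of_nonneg_of_le_pi (by linarith) (by linarith)
    rw [sin_sub_pi] at h0
    linarith
  have key : γ = π - (α + β) := by
    apply injOn_cos ⟨hγ0.le, hγ1.le⟩ ⟨by linarith, by linarith⟩
    rw [cos_pi_sub, hcos]
  linarith
end

section
/- Let α, β, γ ∈ (0, π) be real numbers. Suppose (a, b, c) and (a', b', c') are two triples of positive real numbers each satisfying the three equations a² = b² + c² − 2·b·c·cos α, b² = a² + c² − 2·a·c·cos β, c² = a² + b² − 2·a·b·cos γ (and likewise for a', b', c'). Then there exists a real number t > 0 such that a' = t·a, b' = t·b and c' = t·c. -/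
open Real

theorem trigon_aux (x y z a b c : ℝ) (ha : 0 < a) (hb : 0 < b)
    (h1 : a ^ 2 = b ^ 2 + c ^ 2 - 2 * b * c * x)
    (h2 : b ^ 2 = a ^ 2 + c ^ 2 - 2 * a * c * y)
    (h3 : c ^ 2 = a ^ 2 + b ^ 2 - 2 * a * b * z) :
    a * (1 - z ^ 2) = c * (x * z + y) ∧ b * (1 - z ^ 2) = c * (x + y * z) := by
  have e1 : a = b * z + c * y := by
    apply mul_left_cancel₀ ha.ne'
    linarith
  have e2 : b = a * z + c * x := by
    apply mul_left_cancel₀ hb.ne'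
    linarith
  constructor
  · linear_combination e1 + z * e2
  · linear_combination e2 + z * e1

theorem trigon_distance_unique_up_to_scalar
    (α β γ : ℝ) (hα : α ∈ Set.Ioo 0 π) (hβ : β ∈ Set.Ioo 0 π) (hγ : γ ∈ Set.Ioo 0 π)
    (a b c a' b' c' : ℝ) (ha : 0 < a) (hb : 0 < b) (hc : 0 < c)
    (ha' : 0 < a') (hb' : 0 < b') (hc' : 0 < c')
    (h1 : a ^ 2 = b ^ 2 + c ^ 2 - 2 * b * c * Real.cos α)
    (h2 : b ^ 2 = a ^ 2 + c ^ 2 - 2 * a * c * Real.cos β)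
    (h3 : c ^ 2 = a ^ 2 + b ^ 2 - 2 * a * b * Real.cos γ)
    (h1' : a' ^ 2 = b' ^ 2 + c' ^ 2 - 2 * b' * c' * Real.cos α)
    (h2' : b' ^ 2 = a' ^ 2 + c' ^ 2 - 2 * a' * c' * Real.cos β)
    (h3' : c' ^ 2 = a' ^ 2 + b' ^ 2 - 2 * a' * b' * Real.cos γ) :
    ∃ t : ℝ, 0 < t ∧ a' = t * a ∧ b' = t * b ∧ c' = t * c := by
  obtain ⟨p, q⟩ := trigon_aux _ _ _ a b c ha hb h1 h2 h3
  obtain ⟨p', q'⟩ := trigon_aux _ _ _ a' b' c' ha' hb' h1' h2' h3'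
  have hs : (1 - Real.cos γ ^ 2) ≠ 0 := by
    have h := Real.sin_pos_of_mem_Ioo hγ
    have h' := Real.sin_sq_add_cos_sq γ
    have : 0 < Real.sin γ ^ 2 := by positivity
    intro h0
    linarith
  refine ⟨c' / c, by positivity, ?_, ?_, ?_⟩
  · rw [div_mul_eq_mul_div, eq_div_iff hc.ne']
    apply mul_left_cancel₀ hs
    linear_combination c * p' - c' * p
  · rw [div_mul_eq_mul_div, eq_div_iff hc.ne']
    apply mul_left_cancel₀ hs
    linear_combination c * q' - c' * q
  · rw [div_mul_cancel₀ _ hc.ne']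
end

section
/- Let α, β, γ, α', β', γ' ∈ (0, π) be real numbers satisfying α + β + γ = π, α' + β' + γ' = π and α' = π − α. Then there exist positive real numbers a, a', x, x', h satisfying a·sin β = h·sin α, h·sin γ = x·sin β, a'·sin β' = h·sin α', h·sin γ' = x'·sin β', and a·sin β = a'·sin β'; moreover any two such positive 5-tuples (a, a', x, x', h) are positive scalar multiples of each other, and every such solution also satisfies (x + x')·sin β' = a·sin(β + β'). -/
open Real

theorem degenerate_tetragon_sufficiency
    (α β γ α' β' γ' : ℝ)
    (hα : α ∈ Set.Ioo 0 π) (hβ : β ∈ Set.Ioo 0 π) (hγ : γ ∈ Set.Ioo 0 π)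
    (hα' : α' ∈ Set.Ioo 0 π) (hβ' : β' ∈ Set.Ioo 0 π) (hγ' : γ' ∈ Set.Ioo 0 π)
    (hsum1 : α + β + γ = π) (hsum2 : α' + β' + γ' = π) (hsupp : α' = π - α) :
    (∃ a a' x x' h : ℝ, 0 < a ∧ 0 < a' ∧ 0 < x ∧ 0 < x' ∧ 0 < h ∧
      a * Real.sin β = h * Real.sin α ∧
      h * Real.sin γ = x * Real.sin β ∧
      a' * Real.sin β' = h * Real.sin α' ∧
      h * Real.sin γ' = x' * Real.sin β' ∧
      a * Real.sin β = a' * Real.sin β') ∧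
    (∀ a a' x x' h a₂ a₂' x₂ x₂' h₂ : ℝ,
      0 < a → 0 < a' → 0 < x → 0 < x' → 0 < h →
      0 < a₂ → 0 < a₂' → 0 < x₂ → 0 < x₂' → 0 < h₂ →
      a * Real.sin β = h * Real.sin α →
      h * Real.sin γ = x * Real.sin β →
      a' * Real.sin β' = h * Real.sin α' →
      h * Real.sin γ' = x' * Real.sin β' →
      a * Real.sin β = a' * Real.sin β' →
      a₂ * Real.sin β = h₂ * Real.sin α →
      h₂ * Real.sin γ = x₂ * Real.sin β →
      a₂' * Real.sin β' = h₂ * Real.sin α' →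
      h₂ * Real.sin γ' = x₂' * Real.sin β' →
      a₂ * Real.sin β = a₂' * Real.sin β' →
      ∃ t : ℝ, 0 < t ∧ a₂ = t * a ∧ a₂' = t * a' ∧ x₂ = t * x ∧ x₂' = t * x' ∧
        h₂ = t * h) ∧
    (∀ a a' x x' h : ℝ,
      0 < a → 0 < a' → 0 < x → 0 < x' → 0 < h →
      a * Real.sin β = h * Real.sin α →
      h * Real.sin γ = x * Real.sin β →
      a' * Real.sin β' = h * Real.sin α' →
      h * Real.sin γ' = x' * Real.sin β' →
      a * Real.sin β = a' * Real.sin β' →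
      (x + x') * Real.sin β' = a * Real.sin (β + β')) := by
  have sα := Real.sin_pos_of_mem_Ioo hα
  have sβ := Real.sin_pos_of_mem_Ioo hβ
  have sγ := Real.sin_pos_of_mem_Ioo hγ
  have sα' := Real.sin_pos_of_mem_Ioo hα'
  have sβ' := Real.sin_pos_of_mem_Ioo hβ'
  have sγ' := Real.sin_pos_of_mem_Ioo hγ'
  have e : Real.sin α' = Real.sin α := by rw [hsupp, Real.sin_pi_sub]
  have e1 : Real.sin γ = Real.sin (α + β) := by
    rw [← Real.sin_pi_sub (α + β)]; congr 1; linarith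
  have e2 : Real.sin γ' = Real.sin (α - β') := by
    congr 1; linarith
  refine ⟨⟨Real.sin α / Real.sin β, Real.sin α' / Real.sin β', Real.sin γ / Real.sin β,
    Real.sin γ' / Real.sin β', 1, by positivity, by positivity, by positivity, by positivity,
    one_pos, ?_, ?_, ?_, ?_, ?_⟩, ?_, ?_⟩
  · field_simp
  · field_simp
  · field_simp
  · field_simp
  · rw [e]; field_simp
  · intro a a' x x' h a₂ a₂' x₂ x₂' h₂ _ _ _ _ hh _ _ _ _ hh₂ p1 p2 p3 p4 _ q1 q2 q3 q4 _
    obtain ⟨t, ht⟩ : ∃ t, h₂ = t * h := ⟨h₂ / h, by field_simp⟩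
    have htpos : 0 < t := by
      rw [ht] at hh₂
      exact pos_of_mul_pos_left hh₂ hh.le
    subst ht
    refine ⟨t, htpos, ?_, ?_, ?_, ?_, rfl⟩
    · apply mul_right_cancel₀ sβ.ne'
      linear_combination q1 - t * p1
    · apply mul_right_cancel₀ sβ'.ne'
      linear_combination q3 - t * p3
    · apply mul_right_cancel₀ sβ.ne'
      linear_combination t * p2 - q2
    · apply mul_right_cancel₀ sβ'.ne'
      linear_combination t * p4 - q4
  · intro a a' x x' h _ _ _ _ _ p1 p2 p3 p4 _
    apply mul_right_cancel₀ sβ.ne'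
    rw [e1, Real.sin_add] at p2
    rw [e2, Real.sin_sub] at p4
    rw [Real.sin_add]
    linear_combination (-Real.sin β') * p2 - Real.sin β * p4
      - (Real.sin β * Real.cos β' + Real.cos β * Real.sin β') * p1
end

section
/- Let V be a real inner product space and let A, B, C, D ∈ V be four points no three of which are collinear (for every three of the four points, ¬ Collinear ℝ of that triple). Then sin(∠ B A D) · sin(∠ C B D) · sin(∠ A C D) = sin(∠ C A D) · sin(∠ A B D) · sin(∠ B C D). -/
open Real EuclideanGeometry

theorem tetragon_metrizability_necessity
    {V : Type*} [NormedAddCommGroup V] [InnerProductSpace ℝ V]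
    (A B C D : V)
    (h1 : ¬ Collinear ℝ ({A, B, C} : Set V))
    (h2 : ¬ Collinear ℝ ({A, B, D} : Set V))
    (h3 : ¬ Collinear ℝ ({A, C, D} : Set V))
    (h4 : ¬ Collinear ℝ ({B, C, D} : Set V)) :
    Real.sin (∠ B A D) * Real.sin (∠ C B D) * Real.sin (∠ A C D) =
      Real.sin (∠ C A D) * Real.sin (∠ A B D) * Real.sin (∠ B C D) := by
  have hAD : dist A D ≠ 0 := by
    rw [dist_ne_zero]; rintro rfl
    apply h2; rw [Set.insert_comm, Set.pair_eq_singleton]; exact collinear_pair ℝ _ _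
  have hBD : dist B D ≠ 0 := by
    rw [dist_ne_zero]; rintro rfl
    apply h2; rw [Set.pair_eq_singleton]; exact collinear_pair ℝ _ _
  have hCD : dist C D ≠ 0 := by
    rw [dist_ne_zero]; rintro rfl
    apply h3; rw [Set.pair_eq_singleton]; exact collinear_pair ℝ _ _
  have e1 := sin_angle_mul_dist_eq_sin_angle_mul_dist B A D
  have e2 := sin_angle_mul_dist_eq_sin_angle_mul_dist C B D
  have e3 := sin_angle_mul_dist_eq_sin_angle_mul_dist A C D
  rw [angle_comm D B A, dist_comm D B] at e1
  rw [angle_comm D C B, dist_comm D C] at e2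
  rw [angle_comm D A C, dist_comm D A] at e3
  apply mul_right_cancel₀ (mul_ne_zero (mul_ne_zero hAD hBD) hCD)
  calc _ = (Real.sin (∠ B A D) * dist A D) * (Real.sin (∠ C B D) * dist B D) *
        (Real.sin (∠ A C D) * dist C D) := by ring
    _ = _ := by rw [e1, e2, e3]; ring
end

section
/- Let V be a real inner product space and let A, B, C, D, E, F ∈ V be six points no three of which are collinear (for every three of the six points, ¬ Collinear ℝ of that triple). Then sin(∠ E A F) · sin(∠ A B E) · sin(∠ A C B) · sin(∠ C D A) · sin(∠ C E D) · sin(∠ E F C) = sin(∠ C A D) · sin(∠ A B C) · sin(∠ E C F) · sin(∠ C D E) · sin(∠ A E B) · sin(∠ E F A). -/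
open Real EuclideanGeometry

theorem cyc_aux (s1 s2 s3 s4 s5 s6 l1 l2 l3 l4 l5 l6 r1 r2 r3 r4 r5 r6 : ℝ)
    (h1 : l1 * s2 = r1 * s1) (h2 : l2 * s3 = r2 * s2) (h3 : l3 * s4 = r3 * s3)
    (h4 : l4 * s5 = r4 * s4) (h5 : l5 * s6 = r5 * s5) (h6 : l6 * s1 = r6 * s6)
    (hne : ¬ (s1 = 0 ∧ s2 = 0 ∧ s3 = 0 ∧ s4 = 0 ∧ s5 = 0 ∧ s6 = 0)) :
    l1 * l2 * l3 * l4 * l5 * l6 = r1 * r2 * r3 * r4 * r5 * r6 := by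
  by_cases hall : s1 * s2 * s3 * s4 * s5 * s6 = 0
  · by_cases z1 : s1 = 0 <;> by_cases z2 : s2 = 0 <;> by_cases z3 : s3 = 0 <;>
      by_cases z4 : s4 = 0 <;> by_cases z5 : s5 = 0 <;> by_cases z6 : s6 = 0 <;>
      simp_all
  · apply mul_right_cancel₀ hall
    calc l1 * l2 * l3 * l4 * l5 * l6 * (s1 * s2 * s3 * s4 * s5 * s6)
        = (l1 * s2) * (l2 * s3) * (l3 * s4) * (l4 * s5) * (l5 * s6) * (l6 * s1) := by ring
      _ = _ := by rw [h1, h2, h3, h4, h5, h6]; ring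

theorem hexagon_identity_necessity
    {V : Type*} [NormedAddCommGroup V] [InnerProductSpace ℝ V]
    (A B C D E F : V)
    (hncol : ∀ X Y Z : V, X ∈ ({A, B, C, D, E, F} : Set V) →
      Y ∈ ({A, B, C, D, E, F} : Set V) → Z ∈ ({A, B, C, D, E, F} : Set V) →
      X ≠ Y → X ≠ Z → Y ≠ Z → ¬ Collinear ℝ ({X, Y, Z} : Set V)) :
    Real.sin (∠ E A F) * Real.sin (∠ A B E) * Real.sin (∠ A C B) *
        Real.sin (∠ C D A) * Real.sin (∠ C E D) * Real.sin (∠ E F C) =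
      Real.sin (∠ C A D) * Real.sin (∠ A B C) * Real.sin (∠ E C F) *
        Real.sin (∠ C D E) * Real.sin (∠ A E B) * Real.sin (∠ E F A) := by
  -- law of sines, in the form (angle at Y) * XY = (angle at Z) * XZ
  have key : ∀ X Y Z : V, Real.sin (∠ X Y Z) * dist X Y = Real.sin (∠ X Z Y) * dist X Z := by
    intro X Y Z
    have := law_sin Z Y X
    rw [angle_comm Z Y X, dist_comm Y X] at this
    exact this
  by_cases hz : dist E F = 0 ∧ dist A E = 0 ∧ dist A B = 0 ∧ dist A C = 0 ∧ dist C D = 0 ∧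
      dist C E = 0
  · simp only [dist_eq_zero] at hz
    obtain ⟨rfl, rfl, rfl, rfl, rfl, -⟩ := hz
    rfl
  · have h := cyc_aux (dist E F) (dist A E) (dist A B) (dist A C) (dist C D) (dist C E)
      (sin (∠ E A F)) (sin (∠ A B E)) (sin (∠ A C B)) (sin (∠ C D A)) (sin (∠ C E D))
      (sin (∠ E F C))
      (sin (∠ E F A)) (sin (∠ A E B)) (sin (∠ A B C)) (sin (∠ C A D)) (sin (∠ C D E))
      (sin (∠ E C F))
      (by rw [dist_comm A E]; exact key E A F) (key A B E) (key A C B)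
      (by rw [dist_comm A C]; exact key C D A) (key C E D)
      (by rw [dist_comm C E]; exact key E F C) hz
    rw [h]; ring
end

section
/- Let X = {A, B, C, D} be a set of four points carrying a betweenness relation B and an angle function ∠ making (X, B, ∠) a euclidean angle space, and suppose X is a tetragon (no three of the four points are collinear, i.e. B is empty). Then there exists a distance function d on X euclidean-compatible with ∠, unique up to multiplication by a positive constant, if and only if the four tetragon metrizability conditions hold: sin∠(D,B,A)·sin∠(B,C,A)·sin∠(C,D,A) = sin∠(C,B,A)·sin∠(D,C,A)·sin∠(B,D,A); sin∠(C,A,B)·sin∠(D,C,B)·sin∠(A,D,B) = sin∠(D,A,B)·sin∠(A,C,B)·sin∠(C,D,B); sin∠(B,A,C)·sin∠(D,B,C)·sin∠(A,D,C) = sin∠(D,A,C)·sin∠(A,B,C)·sin∠(B,D,C); sin∠(B,A,D)·sin∠(C,B,D)·sin∠(A,C,D) = sin∠(C,A,D)·sin∠(A,B,D)·sin∠(B,C,D). -/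
open Real EuclideanGeometry

/-- An angle space: a set `X` with a betweenness relation `btw` (axioms (B1)–(B4))
and an angle function `ang` (axioms (i)–(iii), the last being the First Axiom of
Collinearity). `btw A B C` means "`B` is between `A` and `C`"; `ang A B C` is the
angle at vertex `B`. -/
structure AngleSpace (X : Type*) where
  btw : X → X → X → Prop
  ang : X → X → X → ℝ
  /-- (B1) the three points of a betweenness triple are pairwise distinct -/
  btw_ne₁ : ∀ {A B C}, btw A B C → A ≠ B
  btw_ne₂ : ∀ {A B C}, btw A B C → B ≠ C
  btw_ne₃ : ∀ {A B C}, btw A B C → A ≠ C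
  /-- (B2) -/
  btw_symm : ∀ {A B C}, btw A B C → btw C B A
  /-- (B3) -/
  btw_asymm : ∀ {A B C}, btw A B C → ¬ btw B A C
  /-- (B4) Strong transitivity: if two betweenness triples share two points then any
  three distinct points among them are collinear. -/
  btw_strong_trans : ∀ {P₁ P₂ P₃ Q₁ Q₂ Q₃ : X}, btw P₁ P₂ P₃ → btw Q₁ Q₂ Q₃ →
    (∃ u v : X, u ≠ v ∧ u ∈ ({P₁, P₂, P₃} : Set X) ∧ u ∈ ({Q₁, Q₂, Q₃} : Set X) ∧
      v ∈ ({P₁, P₂, P₃} : Set X) ∧ v ∈ ({Q₁, Q₂, Q₃} : Set X)) →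
    ∀ x y z : X, x ∈ ({P₁, P₂, P₃, Q₁, Q₂, Q₃} : Set X) →
      y ∈ ({P₁, P₂, P₃, Q₁, Q₂, Q₃} : Set X) →
      z ∈ ({P₁, P₂, P₃, Q₁, Q₂, Q₃} : Set X) →
      x ≠ y → x ≠ z → y ≠ z → (btw y x z ∨ btw x y z ∨ btw x z y)
  /-- (i) symmetry of the angle function -/
  ang_symm : ∀ A B C, A ≠ B → B ≠ C → ang A B C = ang C B A
  /-- the angle function takes values in `[0, π]` -/
  ang_mem : ∀ A B C, A ≠ B → B ≠ C → ang A B C ∈ Set.Icc 0 π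
  /-- (ii) zero angles -/
  ang_eq_zero : ∀ A B C, A ≠ B → B ≠ C →
    (A = C ∨ btw B A C ∨ btw B C A) → ang A B C = 0
  /-- (ii) straight angles -/
  ang_eq_pi : ∀ A B C, btw A B C → ang A B C = π
  /-- (ii) positivity in the remaining cases -/
  ang_pos : ∀ A B C, A ≠ B → B ≠ C → ¬ (A = C ∨ btw B A C ∨ btw B C A) →
    ¬ btw A B C → 0 < ang A B C
  /-- (iii) First Axiom of Collinearity -/
  ang_first_collinearity : ∀ A B C D, btw B C D → A ≠ B → ang A B C = ang A B D

namespace AngleSpace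

variable {X : Type*} (S : AngleSpace X)

/-- Three points are collinear if one of them is between the other two. -/
def Collin (A B C : X) : Prop :=
  S.btw B A C ∨ S.btw A B C ∨ S.btw A C B

/-- No three distinct points of `s` are collinear. -/
def NoThreeCollinear (s : Set X) : Prop :=
  ∀ x y z : X, x ∈ s → y ∈ s → z ∈ s → x ≠ y → x ≠ z → y ≠ z → ¬ S.Collin x y z

/-- A distance function euclidean-compatible with the angle space: a metric whose
metric betweenness coincides with `btw` and which satisfies the law of cosines with
respect to `ang`. -/
def EuclideanCompatible (d : X → X → ℝ) : Prop :=
  (∀ x y, 0 ≤ d x y) ∧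
  (∀ x y, d x y = d y x) ∧
  (∀ x y, d x y = 0 ↔ x = y) ∧
  (∀ x y z, d x z ≤ d x y + d y z) ∧
  (∀ A B C, S.btw A B C ↔ (A ≠ B ∧ B ≠ C ∧ A ≠ C ∧ d A B + d B C = d A C)) ∧
  (∀ A B C, A ≠ B → A ≠ C →
    d B C ^ 2 = d A B ^ 2 + d A C ^ 2 - 2 * d A B * d A C * Real.cos (S.ang B A C))

/-- (A) the angle space is euclidean: the angles of every trigon sum to `π`. -/
def IsEuclidean : Prop :=
  ∀ A B C : X, A ≠ B → A ≠ C → B ≠ C →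
    S.ang A B C + S.ang B C A + S.ang C A B = π

/-- (B) the Second Axiom of Collinearity. -/
def SecondAxiom : Prop :=
  ∀ A B C D : X, A ≠ B → A ≠ C → A ≠ D → B ≠ C → B ≠ D → C ≠ D →
    S.btw A B C →
    ¬ S.Collin A B D → ¬ S.Collin A C D → ¬ S.Collin B C D →
    S.ang A D C = S.ang A D B + S.ang B D C ∧ S.ang A B D + S.ang C B D = π

/-- (C) the tetragon metrizability condition. -/
def TetragonCond : Prop :=
  ∀ A B C D : X, A ≠ B → A ≠ C → A ≠ D → B ≠ C → B ≠ D → C ≠ D →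
    S.NoThreeCollinear {A, B, C, D} →
    (Real.sin (S.ang D B A) * Real.sin (S.ang B C A) * Real.sin (S.ang C D A) =
      Real.sin (S.ang C B A) * Real.sin (S.ang D C A) * Real.sin (S.ang B D A)) ∧
    (Real.sin (S.ang C A B) * Real.sin (S.ang D C B) * Real.sin (S.ang A D B) =
      Real.sin (S.ang D A B) * Real.sin (S.ang A C B) * Real.sin (S.ang C D B)) ∧
    (Real.sin (S.ang B A C) * Real.sin (S.ang D B C) * Real.sin (S.ang A D C) =
      Real.sin (S.ang D A C) * Real.sin (S.ang A B C) * Real.sin (S.ang B D C)) ∧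
    (Real.sin (S.ang B A D) * Real.sin (S.ang C B D) * Real.sin (S.ang A C D) =
      Real.sin (S.ang C A D) * Real.sin (S.ang A B D) * Real.sin (S.ang B C D))

/-- (D) the Global Compatibility Condition: the pentagon and hexagon identities. -/
def GlobalCompat : Prop :=
  (∀ A B C D E : X, A ≠ B → A ≠ C → A ≠ D → A ≠ E → B ≠ C → B ≠ D → B ≠ E →
    C ≠ D → C ≠ E → D ≠ E →
    S.NoThreeCollinear {A, B, C, D, E} →
    Real.sin (S.ang D A E) * Real.sin (S.ang A B D) * Real.sin (S.ang A C B) *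
        Real.sin (S.ang A D C) * Real.sin (S.ang C E D) =
      Real.sin (S.ang C A D) * Real.sin (S.ang A B C) * Real.sin (S.ang D C E) *
        Real.sin (S.ang A D B) * Real.sin (S.ang A E D)) ∧
  (∀ A B C D E F : X, A ≠ B → A ≠ C → A ≠ D → A ≠ E → A ≠ F → B ≠ C → B ≠ D →
    B ≠ E → B ≠ F → C ≠ D → C ≠ E → C ≠ F → D ≠ E → D ≠ F → E ≠ F →
    S.NoThreeCollinear {A, B, C, D, E, F} →
    Real.sin (S.ang E A F) * Real.sin (S.ang A B E) * Real.sin (S.ang A C B) *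
        Real.sin (S.ang C D A) * Real.sin (S.ang C E D) * Real.sin (S.ang E F C) =
      Real.sin (S.ang C A D) * Real.sin (S.ang A B C) * Real.sin (S.ang E C F) *
        Real.sin (S.ang C D E) * Real.sin (S.ang A E B) * Real.sin (S.ang E F A))

end AngleSpace

namespace AngleSpace

/-- Algebraic core of the law of sines. -/
theorem sines_of_cosines {p q r β γ : ℝ} (hp : 0 < p) (hq : 0 < q) (hr : 0 < r)
    (sβ : 0 < Real.sin β) (sγ : 0 < Real.sin γ)
    (h1 : q ^ 2 = r ^ 2 + p ^ 2 - 2 * r * p * Real.cos β)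
    (h2 : r ^ 2 = q ^ 2 + p ^ 2 - 2 * q * p * Real.cos γ) :
    r * Real.sin β = q * Real.sin γ := by
  have e1 := Real.sin_sq_add_cos_sq β
  have e2 := Real.sin_sq_add_cos_sq γ
  have k1 : (2 * p * (r * Real.sin β)) ^ 2 = 4 * r ^ 2 * p ^ 2 - (r ^ 2 + p ^ 2 - q ^ 2) ^ 2 := by
    have : r ^ 2 + p ^ 2 - q ^ 2 = 2 * r * p * Real.cos β := by linarith
    rw [this]
    linear_combination (4 * r ^ 2 * p ^ 2) * e1
  have k2 : (2 * p * (q * Real.sin γ)) ^ 2 = 4 * q ^ 2 * p ^ 2 - (q ^ 2 + p ^ 2 - r ^ 2) ^ 2 := by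
    have : q ^ 2 + p ^ 2 - r ^ 2 = 2 * q * p * Real.cos γ := by linarith
    rw [this]
    linear_combination (4 * q ^ 2 * p ^ 2) * e2
  have k3 : (2 * p * (r * Real.sin β)) ^ 2 = (2 * p * (q * Real.sin γ)) ^ 2 := by
    rw [k1, k2]; ring
  have k4 := (sq_eq_sq₀ (by positivity) (by positivity)).1 k3
  exact mul_left_cancel₀ (by positivity : (2 * p) ≠ 0) k4

theorem sin_ang_pos {X : Type*} (S : AngleSpace X) (ht : ∀ x y z : X, ¬ S.btw x y z)
    (he : S.IsEuclidean) {x y z : X} (h1 : x ≠ y) (h2 : x ≠ z) (h3 : y ≠ z) :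
    0 < Real.sin (S.ang x y z) := by
  have hp : ∀ a b c : X, a ≠ b → b ≠ c → a ≠ c → 0 < S.ang a b c := by
    intro a b c hab hbc hac
    exact S.ang_pos a b c hab hbc (by simp [hac, ht]) (ht _ _ _)
  have e := he x y z h1 h2 h3
  have p1 := hp x y z h1 h3 h2
  have p2 := hp y z x h3 h2.symm h1.symm
  have p3 := hp z x y h2.symm h1 h3.symm
  exact Real.sin_pos_of_pos_of_lt_pi p1 (by linarith)

theorem law_sines {X : Type*} (S : AngleSpace X) (ht : ∀ x y z : X, ¬ S.btw x y z)
    (he : S.IsEuclidean) {d : X → X → ℝ} (hd : S.EuclideanCompatible d)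
    {x y z : X} (h1 : x ≠ y) (h2 : x ≠ z) (h3 : y ≠ z) :
    d x y * Real.sin (S.ang x y z) = d x z * Real.sin (S.ang x z y) := by
  obtain ⟨h0, hs, hz, -, -, hc⟩ := hd
  have hp : ∀ a b : X, a ≠ b → 0 < d a b := fun a b hab =>
    lt_of_le_of_ne (h0 a b) (fun h => hab ((hz a b).1 h.symm))
  have c1 := hc y x z h1.symm h3
  have c2 := hc z x y h2.symm h3.symm
  rw [hs y x] at c1
  rw [hs z x, hs z y] at c2
  exact sines_of_cosines (hp y z h3) (hp x z h2) (hp x y h1)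
    (S.sin_ang_pos ht he h1 h2 h3) (S.sin_ang_pos ht he h2 h1 h3.symm) c1 c2

/-- The tetragon identity at the vertex `A`. -/
theorem identity_at {X : Type*} (S : AngleSpace X) (ht : ∀ x y z : X, ¬ S.btw x y z)
    (he : S.IsEuclidean) {d : X → X → ℝ} (hd : S.EuclideanCompatible d)
    {A B C D : X} (hAB : A ≠ B) (hAC : A ≠ C) (hAD : A ≠ D) (hBC : B ≠ C) (hBD : B ≠ D)
    (hCD : C ≠ D) :
    Real.sin (S.ang D B A) * Real.sin (S.ang B C A) * Real.sin (S.ang C D A) =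
        Real.sin (S.ang C B A) * Real.sin (S.ang D C A) * Real.sin (S.ang B D A) := by
  have l1 := S.law_sines ht he hd hAB hAD hBD
  have l2 := S.law_sines ht he hd hAC hAB hBC.symm
  have l3 := S.law_sines ht he hd hAD hAC hCD.symm
  rw [S.ang_symm A _ _ ‹_› ‹_›, S.ang_symm A _ _ ‹_› hBD.symm] at l1
  rw [S.ang_symm A _ _ ‹_› hBC.symm, S.ang_symm A _ _ ‹_› hBC] at l2
  rw [S.ang_symm A _ _ ‹_› hCD.symm, S.ang_symm A _ _ ‹_› hCD] at l3
  have hp : ∀ a b : X, a ≠ b → d a b ≠ 0 := fun a b hab h => hab ((hd.2.2.1 a b).1 h)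
  have p1 := hp A B hAB
  have p2 := hp A C hAC
  have p3 := hp A D hAD
  have : d A B * d A C * d A D ≠ 0 := by positivity
  apply mul_left_cancel₀ this
  calc _ = (d A B * Real.sin (S.ang D B A)) * (d A C * Real.sin (S.ang B C A)) *
        (d A D * Real.sin (S.ang C D A)) := by ring
    _ = _ := by rw [l1, l2, l3]; ring

/-- Sides of the trigon `x y z` are proportional to the sines of the opposite angles. -/
def Tri {X : Type*} (S : AngleSpace X) (d : X → X → ℝ) (x y z : X) : Prop :=
  ∃ k : ℝ, 0 < k ∧ d x y = k * Real.sin (S.ang x z y) ∧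
    d y z = k * Real.sin (S.ang y x z) ∧ d x z = k * Real.sin (S.ang x y z)

theorem Tri.swap {X : Type*} {S : AngleSpace X} {d : X → X → ℝ} (hs : ∀ x y, d x y = d y x)
    {x y z : X} (h1 : x ≠ y) (h2 : x ≠ z) (h3 : y ≠ z) (h : S.Tri d x y z) :
    S.Tri d y x z := by
  obtain ⟨k, hk, e1, e2, e3⟩ := h
  refine ⟨k, hk, ?_, e3, e2⟩
  rw [hs y x, e1, S.ang_symm x z y h2 h3.symm]

theorem Tri.rot {X : Type*} {S : AngleSpace X} {d : X → X → ℝ} (hs : ∀ x y, d x y = d y x)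
    {x y z : X} (h1 : x ≠ y) (h2 : x ≠ z) (h3 : y ≠ z) (h : S.Tri d x y z) :
    S.Tri d y z x := by
  obtain ⟨k, hk, e1, e2, e3⟩ := h
  refine ⟨k, hk, e2, ?_, ?_⟩
  · rw [hs z x, e3, S.ang_symm x y z h1 h3]
  · rw [hs y x, e1, S.ang_symm x z y h2 h3.symm]

theorem tri_all {X : Type*} {S : AngleSpace X} {d : X → X → ℝ} (hs : ∀ x y, d x y = d y x)
    {x y z : X} (h1 : x ≠ y) (h2 : x ≠ z) (h3 : y ≠ z) (h : S.Tri d x y z) :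
    S.Tri d x y z ∧ S.Tri d y z x ∧ S.Tri d z x y ∧ S.Tri d y x z ∧ S.Tri d x z y ∧
      S.Tri d z y x := by
  have a := h.rot hs h1 h2 h3
  have b := a.rot hs h3 h1.symm h2.symm
  exact ⟨h, a, b, h.swap hs h1 h2 h3, b.swap hs h2.symm h3.symm h1,
    a.swap hs h3 h1.symm h2.symm⟩

theorem compatible_of_tri {X : Type*} (S : AngleSpace X) (ht : ∀ x y z : X, ¬ S.btw x y z)
    (he : S.IsEuclidean) {d : X → X → ℝ} (h0 : ∀ x, d x x = 0)
    (hpos : ∀ x y, x ≠ y → 0 < d x y) (hs : ∀ x y, d x y = d y x)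
    (hT : ∀ x y z, x ≠ y → x ≠ z → y ≠ z → S.Tri d x y z) : S.EuclideanCompatible d := by
  have hnn : ∀ x y, 0 ≤ d x y := by
    intro x y
    by_cases h : x = y
    · rw [h, h0]
    · exact (hpos x y h).le
  have hlt : ∀ x y z, x ≠ y → x ≠ z → y ≠ z → d x z < d x y + d y z := by
    intro x y z h1 h2 h3
    obtain ⟨k, hk, e1, e2, e3⟩ := hT x y z h1 h2 h3
    have e := he x y z h1 h2 h3
    have s1 := S.sin_ang_pos ht he h1.symm h3 h2
    have s2 := S.sin_ang_pos ht he h2 h1 h3.symm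
    have s3 := S.sin_ang_pos ht he h1 h2 h3
    rw [S.ang_symm y z x h3 h2.symm, S.ang_symm z x y h2.symm h1] at e
    have e' : S.ang x y z = π - (S.ang x z y + S.ang y x z) := by linarith
    have hsin : Real.sin (S.ang x y z) = Real.sin (S.ang x z y) * Real.cos (S.ang y x z) +
        Real.cos (S.ang x z y) * Real.sin (S.ang y x z) := by
      rw [e', Real.sin_pi_sub, Real.sin_add]
    have c1 : Real.cos (S.ang y x z) < 1 := by
      nlinarith [Real.sin_sq_add_cos_sq (S.ang y x z), Real.cos_le_one (S.ang y x z)]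
    have c2 := Real.cos_le_one (S.ang x z y)
    rw [e1, e2, e3, ← mul_add]
    apply mul_lt_mul_of_pos_left _ hk
    rw [hsin]
    nlinarith
  refine ⟨hnn, hs, ?_, ?_, ?_, ?_⟩
  · intro x y
    constructor
    · intro h
      by_contra hxy
      exact (hpos x y hxy).ne' h
    · rintro rfl
      exact h0 _
  · intro x y z
    by_cases h1 : x = y
    · subst h1; simp [h0]
    by_cases h3 : y = z
    · subst h3; simp [h0]
    by_cases h2 : x = z
    · subst h2; rw [h0]; exact add_nonneg (hnn _ _) (hnn _ _)
    exact (hlt x y z h1 h2 h3).le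
  · intro x y z
    constructor
    · intro h; exact absurd h (ht _ _ _)
    · rintro ⟨h1, h3, h2, h⟩
      exact absurd h (hlt x y z h1 h2 h3).ne'
  · intro x y z h1 h2
    by_cases h3 : y = z
    · subst h3
      rw [S.ang_eq_zero y x y h1.symm h1 (Or.inl rfl), h0, Real.cos_zero]; ring
    · obtain ⟨k, hk, e1, e2, e3⟩ := hT x y z h1 h2 h3
      have e := he x y z h1 h2 h3
      rw [S.ang_symm y z x h3 h2.symm, S.ang_symm z x y h2.symm h1] at e
      have e' : S.ang y x z = π - (S.ang x y z + S.ang x z y) := by linarith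
      rw [e1, e2, e3, e', Real.cos_pi_sub, Real.sin_pi_sub, Real.sin_add, Real.cos_add]
      have q1 := Real.sin_sq_add_cos_sq (S.ang x y z)
      have q2 := Real.sin_sq_add_cos_sq (S.ang x z y)
      generalize Real.sin (S.ang x y z) = s at *
      generalize Real.sin (S.ang x z y) = u at *
      generalize Real.cos (S.ang x y z) = c at *
      generalize Real.cos (S.ang x z y) = v at *
      linear_combination (k ^ 2 * u ^ 2) * q1 + (k ^ 2 * s ^ 2) * q2

/-- Two compatible distances have the same ratio on adjacent edges. -/
theorem ratio_step {X : Type*} (S : AngleSpace X) (ht : ∀ x y z : X, ¬ S.btw x y z)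
    (he : S.IsEuclidean) {d d' : X → X → ℝ} (hd : S.EuclideanCompatible d)
    (hd' : S.EuclideanCompatible d') {t : ℝ}
    {x y z : X} (h1 : x ≠ y) (h2 : x ≠ z) (h3 : y ≠ z) (h : d' x y = t * d x y) :
    d' x z = t * d x z := by
  have l := S.law_sines ht he hd h1 h2 h3
  have l' := S.law_sines ht he hd' h1 h2 h3
  have s := S.sin_ang_pos ht he h2 h1 h3.symm
  apply mul_right_cancel₀ s.ne'
  rw [← l', h, mul_assoc, mul_assoc, l]

theorem tri_of_sines {X : Type*} (S : AngleSpace X) (ht : ∀ x y z : X, ¬ S.btw x y z)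
    (he : S.IsEuclidean) {d : X → X → ℝ} {x y z : X} (h1 : x ≠ y) (h2 : x ≠ z) (h3 : y ≠ z)
    (hpos : 0 < d x y)
    (e1 : d y z * Real.sin (S.ang x z y) = d x y * Real.sin (S.ang y x z))
    (e2 : d x z * Real.sin (S.ang x z y) = d x y * Real.sin (S.ang x y z)) :
    S.Tri d x y z := by
  have s := S.sin_ang_pos ht he h2 h1 h3.symm
  refine ⟨d x y / Real.sin (S.ang x z y), by positivity, by field_simp, ?_, ?_⟩
  · field_simp; linarith
  · field_simp; linarith

open Classical in
/-- A symmetric function on four points with prescribed values. -/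
noncomputable def dist4 {X : Type*} (A B C D : X) (ab ac ad bc bd cd : ℝ) (x y : X) : ℝ :=
  if (x = A ∧ y = B) ∨ (x = B ∧ y = A) then ab
  else if (x = A ∧ y = C) ∨ (x = C ∧ y = A) then ac
  else if (x = A ∧ y = D) ∨ (x = D ∧ y = A) then ad
  else if (x = B ∧ y = C) ∨ (x = C ∧ y = B) then bc
  else if (x = B ∧ y = D) ∨ (x = D ∧ y = B) then bd
  else if (x = C ∧ y = D) ∨ (x = D ∧ y = C) then cd
  else 0

end AngleSpace

/-- Proposition 5.2: metrizability condition for tetragons. -/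
theorem tetragon_metrizability
    {X : Type*} (S : AngleSpace X) (A B C D : X)
    (hAB : A ≠ B) (hAC : A ≠ C) (hAD : A ≠ D) (hBC : B ≠ C) (hBD : B ≠ D)
    (hCD : C ≠ D)
    (hcover : ∀ x : X, x = A ∨ x = B ∨ x = C ∨ x = D)
    (htetragon : ∀ x y z : X, ¬ S.btw x y z)
    (heuclidean : S.IsEuclidean) :
    (∃ d : X → X → ℝ, S.EuclideanCompatible d ∧
      ∀ d' : X → X → ℝ, S.EuclideanCompatible d' →
        ∃ t : ℝ, 0 < t ∧ ∀ x y : X, d' x y = t * d x y)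
    ↔
    ((Real.sin (S.ang D B A) * Real.sin (S.ang B C A) * Real.sin (S.ang C D A) =
        Real.sin (S.ang C B A) * Real.sin (S.ang D C A) * Real.sin (S.ang B D A)) ∧
      (Real.sin (S.ang C A B) * Real.sin (S.ang D C B) * Real.sin (S.ang A D B) =
        Real.sin (S.ang D A B) * Real.sin (S.ang A C B) * Real.sin (S.ang C D B)) ∧
      (Real.sin (S.ang B A C) * Real.sin (S.ang D B C) * Real.sin (S.ang A D C) =
        Real.sin (S.ang D A C) * Real.sin (S.ang A B C) * Real.sin (S.ang B D C)) ∧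
      (Real.sin (S.ang B A D) * Real.sin (S.ang C B D) * Real.sin (S.ang A C D) =
        Real.sin (S.ang C A D) * Real.sin (S.ang A B D) * Real.sin (S.ang B C D))) := by
  have sp : ∀ x y z : X, x ≠ y → x ≠ z → y ≠ z → 0 < Real.sin (S.ang x y z) :=
    fun x y z h1 h2 h3 => S.sin_ang_pos htetragon heuclidean h1 h2 h3
  constructor
  · rintro ⟨d, hd, -⟩
    refine ⟨S.identity_at htetragon heuclidean hd hAB hAC hAD hBC hBD hCD, ?_, ?_, ?_⟩
    · have := S.identity_at htetragon heuclidean hd hAB.symm hBC hBD hAC hAD hCD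
      linarith
    · have := S.identity_at htetragon heuclidean hd hAC.symm hBC.symm hCD hAB hAD hBD
      linarith
    · have := S.identity_at htetragon heuclidean hd hAD.symm hBD.symm hCD.symm hAB hAC hBC
      linarith
  · rintro ⟨c1, c2, c3, -⟩
    have n1 := hAB.symm
    have n2 := hAC.symm
    have n3 := hAD.symm
    have n4 := hBC.symm
    have n5 := hBD.symm
    have n6 := hCD.symm
    rw [S.ang_symm D B A n5 n1, S.ang_symm B C A hBC n2, S.ang_symm C D A hCD n3,
      S.ang_symm C B A n4 n1, S.ang_symm D C A n6 n2, S.ang_symm B D A hBD n3] at c1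
    rw [S.ang_symm C A B n2 hAB, S.ang_symm D C B n6 n4, S.ang_symm D A B n3 hAB,
      S.ang_symm C D B hCD n5] at c2
    rw [S.ang_symm D B C n5 hBC, S.ang_symm D A C n3 hAC] at c3
    have pABC := sp A B C hAB hAC hBC
    have pACB := sp A C B hAC hAB n4
    have pBAC := sp B A C n1 hBC hAC
    have pABD := sp A B D hAB hAD hBD
    have pADB := sp A D B hAD hAB n5
    have pBAD := sp B A D n1 hBD hAD
    have pACD := sp A C D hAC hAD hCD
    have pADC := sp A D C hAD hAC n6
    have pCAD := sp C A D n2 hCD hAD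
    have pBCD := sp B C D hBC hBD hCD
    have pBDC := sp B D C hBD hBC n6
    have pCBD := sp C B D n4 hCD hBD
    obtain ⟨ac, hac⟩ : ∃ r, r = Real.sin (S.ang A B C) / Real.sin (S.ang A C B) := ⟨_, rfl⟩
    obtain ⟨ad, had⟩ : ∃ r, r = Real.sin (S.ang A B D) / Real.sin (S.ang A D B) := ⟨_, rfl⟩
    obtain ⟨bc, hbc⟩ : ∃ r, r = Real.sin (S.ang B A C) / Real.sin (S.ang A C B) := ⟨_, rfl⟩
    obtain ⟨bd, hbd⟩ : ∃ r, r = Real.sin (S.ang B A D) / Real.sin (S.ang A D B) := ⟨_, rfl⟩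
    obtain ⟨cd, hcd⟩ : ∃ r, r = ac * Real.sin (S.ang C A D) / Real.sin (S.ang A D C) :=
      ⟨_, rfl⟩
    have qac : 0 < ac := by rw [hac]; positivity
    have qad : 0 < ad := by rw [had]; positivity
    have qbc : 0 < bc := by rw [hbc]; positivity
    have qbd : 0 < bd := by rw [hbd]; positivity
    have qcd : 0 < cd := by rw [hcd]; positivity
    obtain ⟨d, hd⟩ : ∃ d, d = AngleSpace.dist4 A B C D 1 ac ad bc bd cd := ⟨_, rfl⟩
    have dAB : d A B = 1 := by rw [hd]; simp [AngleSpace.dist4]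
    have dAC : d A C = ac := by rw [hd]; simp [AngleSpace.dist4, *]
    have dAD : d A D = ad := by rw [hd]; simp [AngleSpace.dist4, *]
    have dBC : d B C = bc := by rw [hd]; simp [AngleSpace.dist4, *]
    have dBD : d B D = bd := by rw [hd]; simp [AngleSpace.dist4, *]
    have dCD : d C D = cd := by rw [hd]; simp [AngleSpace.dist4, *]
    have hs : ∀ x y, d x y = d y x := by
      intro x y
      rw [hd]
      rcases hcover x with rfl | rfl | rfl | rfl <;>
      rcases hcover y with rfl | rfl | rfl | rfl <;> simp [AngleSpace.dist4, *]
    have h0 : ∀ x, d x x = 0 := by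
      intro x
      rw [hd]
      rcases hcover x with rfl | rfl | rfl | rfl <;> simp [AngleSpace.dist4, *]
    have hpos : ∀ x y, x ≠ y → 0 < d x y := by
      have r1 := hs B A
      have r2 := hs C A
      have r3 := hs D A
      have r4 := hs C B
      have r5 := hs D B
      have r6 := hs D C
      clear hac had hbc hbd hcd hd c1 c2 c3
      intro x y hxy
      rcases hcover x with rfl | rfl | rfl | rfl <;>
      rcases hcover y with rfl | rfl | rfl | rfl <;>
      first
        | exact absurd rfl hxy
        | linarith
    have tABC : S.Tri d A B C := by
      apply S.tri_of_sines htetragon heuclidean hAB hAC hBC (hpos _ _ hAB)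
      · rw [dBC, dAB, hbc]; field_simp
      · rw [dAC, dAB, hac]; field_simp
    have tABD : S.Tri d A B D := by
      apply S.tri_of_sines htetragon heuclidean hAB hAD hBD (hpos _ _ hAB)
      · rw [dBD, dAB, hbd]; field_simp
      · rw [dAD, dAB, had]; field_simp
    have tACD : S.Tri d A C D := by
      apply S.tri_of_sines htetragon heuclidean hAC hAD hCD (hpos _ _ hAC)
      · rw [dCD, dAC, hcd]; field_simp
      · rw [dAD, dAC, had, hac]; field_simp; linarith
    have tBCD : S.Tri d B C D := by
      apply S.tri_of_sines htetragon heuclidean hBC hBD hCD (hpos _ _ hBC)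
      · rw [dCD, dBC, hcd, hbc, hac]; field_simp; linarith
      · rw [dBD, dBC, hbd, hbc]; field_simp; linarith
    have hT : ∀ x y z, x ≠ y → x ≠ z → y ≠ z → S.Tri d x y z := by
      obtain ⟨a1, a2, a3, a4, a5, a6⟩ := AngleSpace.tri_all hs hAB hAC hBC tABC
      obtain ⟨b1, b2, b3, b4, b5, b6⟩ := AngleSpace.tri_all hs hAB hAD hBD tABD
      obtain ⟨c1, c2, c3, c4, c5, c6⟩ := AngleSpace.tri_all hs hAC hAD hCD tACD
      obtain ⟨d1, d2, d3, d4, d5, d6⟩ := AngleSpace.tri_all hs hBC hBD hCD tBCD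
      intro x y z h1 h2 h3
      rcases hcover x with rfl | rfl | rfl | rfl <;>
      rcases hcover y with rfl | rfl | rfl | rfl <;>
      first
        | exact absurd rfl h1
        | (rcases hcover z with rfl | rfl | rfl | rfl <;>
            first
              | exact absurd rfl h2
              | exact absurd rfl h3
              | assumption)
    have hcomp := S.compatible_of_tri htetragon heuclidean h0 hpos hs hT
    refine ⟨d, hcomp, ?_⟩
    intro d' hd'
    have hs' := hd'.2.1
    have tpos : 0 < d' A B :=
      lt_of_le_of_ne (hd'.1 A B) (fun h => hAB ((hd'.2.2.1 A B).1 h.symm))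
    obtain ⟨t, hteq⟩ : ∃ t, t = d' A B := ⟨_, rfl⟩
    refine ⟨t, hteq ▸ tpos, ?_⟩
    have kAB : d' A B = t * d A B := by rw [dAB, mul_one, hteq]
    have kBA : d' B A = t * d B A := by rw [hs' B A, hs B A]; exact kAB
    have kAC := S.ratio_step htetragon heuclidean hcomp hd' hAB hAC hBC kAB
    have kAD := S.ratio_step htetragon heuclidean hcomp hd' hAB hAD hBD kAB
    have kBC := S.ratio_step htetragon heuclidean hcomp hd' n1 hBC hAC kBA
    have kBD := S.ratio_step htetragon heuclidean hcomp hd' n1 hBD hAD kBA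
    have kCA : d' C A = t * d C A := by rw [hs' C A, hs C A]; exact kAC
    have kCD := S.ratio_step htetragon heuclidean hcomp hd' n2 hCD hAD kCA
    have kDA : d' D A = t * d D A := by rw [hs' D A, hs D A]; exact kAD
    have kCB : d' C B = t * d C B := by rw [hs' C B, hs C B]; exact kBC
    have kDB : d' D B = t * d D B := by rw [hs' D B, hs D B]; exact kBD
    have kDC : d' D C = t * d D C := by rw [hs' D C, hs D C]; exact kCD
    have k0 : ∀ x, d' x x = t * d x x := by
      intro x
      rw [h0, mul_zero]
      exact (hd'.2.2.1 x x).2 rfl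
    intro x y
    rcases hcover x with rfl | rfl | rfl | rfl <;>
    rcases hcover y with rfl | rfl | rfl | rfl <;>
    first
      | exact k0 _
      | assumption
end

section
/- Let V be a real inner product space, let k ≥ 1, and let X₀, X₁, …, X_k ∈ V with Xᵢ ≠ X₀ for all 1 ≤ i ≤ k. Then the determinant of the k×k matrix with entries cos(∠ Xᵢ X₀ Xⱼ) (1 ≤ i, j ≤ k) is nonnegative. -/
open Real EuclideanGeometry

theorem cos_matrix_det_nonneg
    {V : Type*} [NormedAddCommGroup V] [InnerProductSpace ℝ V]
    (k : ℕ) (hk : 1 ≤ k) (X : Fin (k + 1) → V)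
    (hX : ∀ i : Fin k, X i.succ ≠ X 0) :
    0 ≤ Matrix.det (fun i j : Fin k => Real.cos (∠ (X i.succ) (X 0) (X j.succ))) := by
  have h : (fun i j : Fin k => Real.cos (∠ (X i.succ) (X 0) (X j.succ))) =
      Matrix.gram ℝ (fun i : Fin k => ‖X i.succ - X 0‖⁻¹ • (X i.succ - X 0)) := by
    funext i j
    rw [Matrix.gram_apply, real_inner_smul_left, real_inner_smul_right,
      EuclideanGeometry.angle, InnerProductGeometry.cos_angle, vsub_eq_sub, vsub_eq_sub,
      div_eq_mul_inv, mul_inv]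
    ring
  have h2 := (Matrix.posSemidef_gram ℝ
    (fun i : Fin k => ‖X i.succ - X 0‖⁻¹ • (X i.succ - X 0))).det_nonneg
  rw [← h] at h2
  exact h2
end

section
/- Let n ≥ 1 and let X₀, X₁, …, X_{n+1} be n + 2 points of EuclideanSpace ℝ (Fin n) with Xᵢ ≠ X₀ for all 1 ≤ i ≤ n+1. Then the determinant of the (n+1)×(n+1) matrix with entries cos(∠ Xᵢ X₀ Xⱼ) (1 ≤ i, j ≤ n+1) is zero. -/
open Real EuclideanGeometry

theorem cos_matrix_det_eq_zero
    (n : ℕ) (hn : 1 ≤ n) (X : Fin (n + 2) → EuclideanSpace ℝ (Fin n))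
    (hX : ∀ i : Fin (n + 1), X i.succ ≠ X 0) :
    Matrix.det (fun i j : Fin (n + 1) =>
      Real.cos (∠ (X i.succ) (X 0) (X j.succ))) = 0 := by
  have h : (fun i j : Fin (n + 1) => Real.cos (∠ (X i.succ) (X 0) (X j.succ))) =
      Matrix.gram ℝ (fun i : Fin (n + 1) =>
        (‖X i.succ - X 0‖⁻¹ : ℝ) • (X i.succ - X 0)) := by
    funext i j
    rw [Matrix.gram_apply, EuclideanGeometry.angle, InnerProductGeometry.cos_angle,
      real_inner_smul_left, real_inner_smul_right]
    simp only [vsub_eq_sub, div_eq_mul_inv, mul_inv]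
    ring
  rw [h]
  by_contra hd
  have hl := Matrix.linearIndependent_of_det_gram_ne_zero hd
  have := hl.fintype_card_le_finrank
  simp at this
end
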